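/- Let s ≥ 3 and e ≥ 2 be integers. In R(2,2^e)^{⊗s}, the element (z_{2,1}^{2^{e+1}−1} · z_{2,2}^{2^{e+1}−1}) · (z_{3,1}^{2^e+1} · z_{3,2}^{2^e+3}) · ∏_{i=4}^{s} (z_{i,1}^{2^e+1} · z_{i,2}^{2^e}) is nonzero (the product over 4 ≤ i ≤ s being empty if s = 3). -/

import Mathlib

/-!
Write `n = 2 ^ e` and `R = R(2, n) = 𝔽₂[x, y] / (h_{n+1}(x, y), x^{n+2})`. Multiplication by `x - y`
turns `h_{n+1}(x, y)` into `x^{n+2} - y^{n+2}`, so the coefficient of `x^{n+1} y^{n+1}` in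
`(x - y) p` depends only on the class of `p` in `R`. This defines a functional `φ` on `R`; on
monomials it is `1` at `x^{n+1} y^n` and `x^n y^{n+1}`, and `0` elsewhere.

Apply `φ` to all tensor factors of `R^{⊗ s}` but the first. Since `z_{i,1}` and `z_{i,2}` involve
only the first and the `i`-th factor, the value in `R` of this contraction on the product is the
product of the contractions of the groups `z_{i,1}^A z_{i,2}^B`, each of which has at most two terms
by the binomial theorem. They are

* `x^{n-2} y^{n-1} + x^{n-1} y^{n-2}` for `i = 2`,
* `y^3 + x y^2` for `i = 3`,
* `1` for `i ≥ 4`,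

and `φ` takes the value `1` on `x` times their product.
-/

open scoped TensorProduct

/-- Complete homogeneous symmetric polynomial of degree `d` in a list of elements
of a commutative (semi)ring: `h_d(l)`. -/
noncomputable def completeHomog {R : Type*} [CommSemiring R] : List R → ℕ → R
  | [], 0 => 1
  | [], _ + 1 => 0
  | x :: l, d => ∑ t ∈ Finset.range (d + 1), x ^ t * completeHomog l (d - t)

/-- Elementary symmetric polynomial of degree `d` in a list of elements: `e_d(l)`. -/
noncomputable def elemSymm {R : Type*} [CommSemiring R] : List R → ℕ → R
  | _, 0 => 1
  | [], _ + 1 => 0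
  | x :: l, d + 1 => elemSymm l (d + 1) + x * elemSymm l d

/-- The ideal of `(ZMod 2)[x_1, …, x_k]` generated by the complete homogeneous
symmetric polynomials `h_{m+i}(x_1, …, x_{k+1-i})` for `1 ≤ i ≤ k`. -/
noncomputable def flagIdeal (k m : ℕ) : Ideal (MvPolynomial (Fin k) (ZMod 2)) :=
  Ideal.span { p | ∃ i : ℕ, 1 ≤ i ∧ i ≤ k ∧
    p = completeHomog (((List.finRange k).take (k + 1 - i)).map MvPolynomial.X) (m + i) }

/-- `R(k,m)`, the quotient of `(ZMod 2)[x_1, …, x_k]` by `flagIdeal k m`;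
this is the mod-2 cohomology ring of the real flag manifold `F(1^k, m)`. -/
abbrev FlagRing (k m : ℕ) : Type :=
  MvPolynomial (Fin k) (ZMod 2) ⧸ flagIdeal k m

/-- The image of the variable `x_{j+1}` in `R(k,m)` (`j` is 0-indexed). -/
noncomputable def xGen (k m : ℕ) (j : Fin k) : FlagRing k m :=
  Ideal.Quotient.mk (flagIdeal k m) (MvPolynomial.X j)

/-- The zero-divisor `z_{j+1} = x_{j+1} ⊗ 1 + 1 ⊗ x_{j+1}` in `R(k,m) ⊗ R(k,m)`. -/
noncomputable def zGen (k m : ℕ) (j : Fin k) :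
    FlagRing k m ⊗[ZMod 2] FlagRing k m :=
  xGen k m j ⊗ₜ 1 + 1 ⊗ₜ xGen k m j

/-- `x_{i+1,j+1}` in the `s`-fold tensor power `R(k,m)^{⊗ s}`: the element having
`x_{j+1}` in the `(i+1)`-st tensor factor and `1` elsewhere (`i`, `j` 0-indexed). -/
noncomputable def xT (k m s : ℕ) (i : Fin s) (j : Fin k) :
    ⨂[ZMod 2] _ : Fin s, FlagRing k m :=
  PiTensorProduct.tprod (ZMod 2) (fun t => if t = i then xGen k m j else 1)

/-- The `s`-th zero-divisor `z_{i+1,j+1} = x_{1,j+1} + x_{i+1,j+1}` in `R(k,m)^{⊗ s}`. -/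
noncomputable def zT (k m s : ℕ) (hs : 0 < s) (i : Fin s) (j : Fin k) :
    ⨂[ZMod 2] _ : Fin s, FlagRing k m :=
  xT k m s ⟨0, hs⟩ j + xT k m s i j

lemma odd_choose_two_pow_mul_add (m : ℕ) {k j : ℕ} (hj : j < 2 ^ k) :
    Odd ((2 ^ k * m + (2 ^ k - 1)).choose (2 ^ k * m + j)) := by
  induction k generalizing j with
  | zero => simp_all
  | succ k ih =>
    have hlucas := Choose.choose_modEq_choose_mod_mul_choose_div_nat (p := 2)
      (n := 2 ^ (k + 1) * m + (2 ^ (k + 1) - 1)) (k := 2 ^ (k + 1) * m + j)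
    have hpow : 2 ^ (k + 1) * m = 2 * (2 ^ k * m) := by ring
    have hpos : 0 < 2 ^ k := by positivity
    rw [show (2 ^ (k + 1) * m + (2 ^ (k + 1) - 1)) % 2 = 1 by omega,
      show (2 ^ (k + 1) * m + (2 ^ (k + 1) - 1)) / 2 = 2 ^ k * m + (2 ^ k - 1) by omega,
      show (2 ^ (k + 1) * m + j) / 2 = 2 ^ k * m + j / 2 by omega] at hlucas
    have hdigit : Nat.choose 1 ((2 ^ (k + 1) * m + j) % 2) = 1 := by
      rcases Nat.mod_two_eq_zero_or_one (2 ^ (k + 1) * m + j) with h | h <;> simp [h]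
    rw [hdigit, one_mul] at hlucas
    exact Nat.odd_iff.mpr (Eq.trans hlucas (Nat.odd_iff.mp (ih (by omega))))

section TopForm

open MvPolynomial

lemma completeHomog_singleton {R : Type*} [CommSemiring R] (x : R) (d : ℕ) :
    completeHomog [x] d = x ^ d := by
  rw [completeHomog, Finset.sum_eq_single_of_mem d (Finset.self_mem_range_succ d)]
  · simp [completeHomog]
  · intro t ht htd
    obtain ⟨c, hc⟩ : ∃ c, d - t = c + 1 := ⟨d - t - 1, by grind⟩
    rw [hc, completeHomog, mul_zero]

lemma completeHomog_pair_mul_sub {R : Type*} [CommRing R] (x y : R) (d : ℕ) :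
    completeHomog [x, y] d * (x - y) = x ^ (d + 1) - y ^ (d + 1) := by
  rw [completeHomog]
  simp only [completeHomog_singleton]
  exact geom_sum₂_mul x y (d + 1)

lemma flagIdeal_two (m : ℕ) :
    flagIdeal 2 m = Ideal.span {completeHomog [X 0, X 1] (m + 1), X 0 ^ (m + 2)} := by
  rw [flagIdeal]
  congr 1
  ext p
  constructor
  · rintro ⟨i, hi1, hi2, rfl⟩
    obtain rfl | rfl : i = 1 ∨ i = 2 := by omega
    · exact Or.inl rfl
    · exact Or.inr (completeHomog_singleton (X 0) (m + 2))
  · rintro (rfl | rfl)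
    · exact ⟨1, le_rfl, one_le_two, rfl⟩
    · exact ⟨2, one_le_two, le_rfl, (completeHomog_singleton (X 0) (m + 2)).symm⟩

lemma coeff_mul_X_pow_of_lt {σ R : Type*} [CommSemiring R] {d : σ →₀ ℕ} {i : σ} {k : ℕ}
    (hd : d i < k) (p : MvPolynomial σ R) : coeff d (p * X i ^ k) = 0 := by
  rw [X_pow_eq_monomial, coeff_mul_monomial', if_neg]
  rw [Finsupp.single_le_iff]
  exact hd.not_ge

lemma coeff_X_pow_mul_X_pow {R : Type*} [CommSemiring R] (a b c d : ℕ) :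
    coeff (Finsupp.single 0 c + Finsupp.single 1 d)
      (X 0 ^ a * X 1 ^ b : MvPolynomial (Fin 2) R) = if a = c ∧ b = d then 1 else 0 := by
  have hexp : (Finsupp.single 0 a + Finsupp.single 1 b : Fin 2 →₀ ℕ) =
      Finsupp.single 0 c + Finsupp.single 1 d ↔ a = c ∧ b = d := by
    simp [Finsupp.ext_iff, Fin.forall_fin_two]
  simp only [X_pow_eq_monomial, monomial_mul, coeff_monomial, hexp, mul_one]

/-- The functional `p ↦ [x^{n+1} y^{n+1}] (x - y) p` on polynomials in `x = X 0`, `y = X 1`. For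
`R = ZMod 2` it descends to evaluation on the top-degree part of `R(2, n)`. -/
noncomputable def topCoeff (R : Type*) [CommRing R] (n : ℕ) : MvPolynomial (Fin 2) R →ₗ[R] R :=
  lcoeff R (Finsupp.single 0 (n + 1) + Finsupp.single 1 (n + 1)) ∘ₗ
    LinearMap.mulRight R (X 0 - X 1)

lemma topCoeff_apply {R : Type*} [CommRing R] (n : ℕ) (p : MvPolynomial (Fin 2) R) :
    topCoeff R n p =
      coeff (Finsupp.single 0 (n + 1) + Finsupp.single 1 (n + 1)) (p * (X 0 - X 1)) :=
  rfl

lemma topCoeff_monomial {R : Type*} [CommRing R] (n a b : ℕ) :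
    topCoeff R n (X 0 ^ a * X 1 ^ b) =
      (if a = n ∧ b = n + 1 then 1 else 0) - if a = n + 1 ∧ b = n then 1 else 0 := by
  have hexpand : (X 0 ^ a * X 1 ^ b * (X 0 - X 1) : MvPolynomial (Fin 2) R) =
      X 0 ^ (a + 1) * X 1 ^ b - X 0 ^ a * X 1 ^ (b + 1) := by ring
  simp only [topCoeff_apply, hexpand, coeff_sub, coeff_X_pow_mul_X_pow, Nat.add_right_cancel_iff]

lemma topCoeff_mul_X_zero_pow {R : Type*} [CommRing R] (n : ℕ) (p : MvPolynomial (Fin 2) R) :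
    topCoeff R n (p * X 0 ^ (n + 2)) = 0 := by
  rw [topCoeff_apply, mul_right_comm]
  exact coeff_mul_X_pow_of_lt (by simp) _

lemma topCoeff_mul_completeHomog {R : Type*} [CommRing R] (n : ℕ) (p : MvPolynomial (Fin 2) R) :
    topCoeff R n (p * completeHomog [X 0, X 1] (n + 1)) = 0 := by
  rw [topCoeff_apply, mul_assoc, completeHomog_pair_mul_sub, mul_sub, coeff_sub,
    coeff_mul_X_pow_of_lt (by simp), coeff_mul_X_pow_of_lt (by simp), sub_zero]

lemma topCoeff_eq_zero_of_mem_flagIdeal {n : ℕ} {p : MvPolynomial (Fin 2) (ZMod 2)}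
    (hp : p ∈ flagIdeal 2 n) : topCoeff (ZMod 2) n p = 0 := by
  rw [flagIdeal_two, Ideal.mem_span_pair] at hp
  obtain ⟨a, b, rfl⟩ := hp
  rw [map_add, topCoeff_mul_completeHomog, topCoeff_mul_X_zero_pow, add_zero]

/-- The functional `φ` on `R(2, n)` induced by `topCoeff`: evaluation on the top degree `2n + 1`. -/
noncomputable def topForm (n : ℕ) : FlagRing 2 n →ₗ[ZMod 2] ZMod 2 :=
  ((flagIdeal 2 n).restrictScalars (ZMod 2)).liftQ (topCoeff (ZMod 2) n)
    fun _ hp => topCoeff_eq_zero_of_mem_flagIdeal hp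

lemma topForm_monomial (n a b : ℕ) :
    topForm n (xGen 2 n 0 ^ a * xGen 2 n 1 ^ b) =
      (if a = n ∧ b = n + 1 then 1 else 0) + if a = n + 1 ∧ b = n then 1 else 0 := by
  rw [← CharTwo.sub_eq_add]
  exact topCoeff_monomial n a b

end TopForm

section Contraction

open PiTensorProduct (singleAlgHom)

variable {K S : Type*} [CommSemiring K] [CommSemiring S] [Algebra K S] {n : ℕ}

/-- The contraction `S ⊗ S → S`, `a ⊗ b ↦ φ(b) a`, of the second tensor factor along `φ`. -/
noncomputable def contractSnd (φ : S →ₗ[K] K) : S ⊗[K] S →ₗ[K] S :=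
  (TensorProduct.rid K S).toLinearMap ∘ₗ φ.lTensor S

lemma contractSnd_tmul (φ : S →ₗ[K] K) (a b : S) : contractSnd φ (a ⊗ₜ b) = φ b • a := by
  simp [contractSnd]

/-- The contraction `S^{⊗ (n+1)} → S`, `a₀ ⊗ ⋯ ⊗ aₙ ↦ φ(a₁) ⋯ φ(aₙ) a₀`, of all tensor factors
but the first along `φ`. -/
noncomputable def contractTail (φ : S →ₗ[K] K) : (⨂[K] _ : Fin (n + 1), S) →ₗ[K] S :=
  PiTensorProduct.lift ((MultilinearMap.mkPiAlgebra K (Fin (n + 1)) S).compLinearMap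
    (Fin.cons LinearMap.id fun _ => Algebra.linearMap K S ∘ₗ φ))

lemma contractTail_tprod (φ : S →ₗ[K] K) (a : Fin (n + 1) → S) :
    contractTail φ (PiTensorProduct.tprod K a) = (∏ i : Fin n, φ (a i.succ)) • a 0 := by
  simp [contractTail, Fin.prod_univ_succ, Algebra.smul_def, mul_comm]

/-- The algebra map `S ⊗ S → S^{⊗ (n+1)}` placing the two factors at `0` and `i`. -/
noncomputable def pairEmbedding (K S : Type*) [CommSemiring K] [CommSemiring S] [Algebra K S]
    {n : ℕ} (i : Fin (n + 1)) : S ⊗[K] S →ₐ[K] ⨂[K] _ : Fin (n + 1), S :=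
  Algebra.TensorProduct.productMap (singleAlgHom (A := fun _ => S) 0)
    (singleAlgHom (A := fun _ => S) i)

lemma pairEmbedding_tmul (i : Fin (n + 1)) (a b : S) :
    pairEmbedding K S i (a ⊗ₜ b) =
      PiTensorProduct.tprod K (Pi.mulSingle 0 a * Pi.mulSingle i b) :=
  PiTensorProduct.tprod_mul_tprod _ _

lemma prod_pairEmbedding_tmul (a b : Fin n → S) :
    ∏ i, pairEmbedding K S i.succ (a i ⊗ₜ b i) =
      PiTensorProduct.tprod K (Fin.cons (∏ i, a i) b) := by
  simp only [pairEmbedding_tmul]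
  rw [← PiTensorProduct.tprod_prod]
  congr 1
  ext j
  refine Fin.cases ?_ (fun j => ?_) j
  · simp
  · simp [Pi.mulSingle_apply]

lemma contractTail_prod_pairEmbedding (φ : S →ₗ[K] K) (w : Fin n → S ⊗[K] S) :
    contractTail φ (∏ i, pairEmbedding K S i.succ (w i)) = ∏ i, contractSnd φ (w i) := by
  choose F hF using fun i => TensorProduct.exists_finset (w i)
  simp only [hF, map_sum, Finset.prod_univ_sum]
  refine Finset.sum_congr rfl fun p _ => ?_
  simp only [prod_pairEmbedding_tmul, contractTail_tprod, contractSnd_tmul, Fin.cons_zero,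
    Fin.cons_succ, Finset.prod_smul]

lemma contractTail_mul_mul_prod (φ : S →ₗ[K] K) (w₁ w₂ w₃ : S ⊗[K] S) :
    contractTail φ (pairEmbedding K S ⟨1, by omega⟩ w₁ * pairEmbedding K S ⟨2, by omega⟩ w₂ *
        ∏ i : Fin (n + 3) with 3 ≤ i.val, pairEmbedding K S i w₃) =
      contractSnd φ w₁ * contractSnd φ w₂ * contractSnd φ w₃ ^ n := by
  have h := contractTail_prod_pairEmbedding φ
    (Fin.cons w₁ (Fin.cons w₂ fun _ : Fin n => w₃) : Fin (n + 2) → S ⊗[K] S)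
  have htwo : (⟨2, by omega⟩ : Fin (n + 3)) = 2 := rfl
  simpa [htwo, Finset.prod_filter, Fin.prod_univ_succ, mul_assoc] using h

lemma contractSnd_add_pow_mul_add_pow (φ : S →ₗ[K] K) (x y : S) (A B : ℕ) :
    contractSnd φ ((x ⊗ₜ 1 + 1 ⊗ₜ x) ^ A * (y ⊗ₜ 1 + 1 ⊗ₜ y) ^ B) =
      ∑ k ∈ Finset.range (A + 1), ∑ l ∈ Finset.range (B + 1),
        (A.choose k * B.choose l * φ (x ^ k * y ^ l) : K) • (x ^ (A - k) * y ^ (B - l)) := by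
  have hterm (k l : ℕ) : (1 ⊗ₜ x) ^ k * (x ⊗ₜ 1) ^ (A - k) * (A.choose k : S ⊗[K] S) *
      ((1 ⊗ₜ y) ^ l * (y ⊗ₜ 1) ^ (B - l) * (B.choose l : S ⊗[K] S)) =
      (A.choose k * B.choose l : K) • ((x ^ (A - k) * y ^ (B - l)) ⊗ₜ (x ^ k * y ^ l)) := by
    have hpure : (x ^ (A - k) * y ^ (B - l)) ⊗ₜ[K] (x ^ k * y ^ l) =
        (1 ⊗ₜ x) ^ k * (x ⊗ₜ 1) ^ (A - k) * ((1 ⊗ₜ y) ^ l * (y ⊗ₜ 1) ^ (B - l)) := by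
      simp
    rw [hpure, Algebra.smul_def, map_mul, map_natCast, map_natCast]
    ring
  rw [add_comm (x ⊗ₜ 1), add_comm (y ⊗ₜ 1), add_pow, add_pow, Finset.sum_mul_sum]
  simp only [hterm, map_sum, map_smul, contractSnd_tmul, smul_smul]

lemma sum_choose_mul_ite_smul {M : Type*} [AddCommMonoid M] [Module K M] (A B c d : ℕ)
    (f : ℕ → ℕ → M) :
    ∑ k ∈ Finset.range (A + 1), ∑ l ∈ Finset.range (B + 1),
        (A.choose k * B.choose l * if k = c ∧ l = d then 1 else 0 : K) • f k l =
      (A.choose c * B.choose d : K) • f c d := by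
  rw [Finset.sum_eq_single c, Finset.sum_eq_single d]
  · simp
  · intro l _ hl
    simp [hl]
  · intro hd
    simp [Nat.choose_eq_zero_of_lt (by simpa using hd : B < d)]
  · intro k _ hk
    simp [hk]
  · intro hc
    simp [Nat.choose_eq_zero_of_lt (by simpa using hc : A < c)]

end Contraction

section ZeroDivisors

open PiTensorProduct (singleAlgHom singleAlgHom_apply)

lemma zT_eq_pairEmbedding (k m n : ℕ) (hn : 0 < n + 1) (i : Fin (n + 1)) (j : Fin k) :
    zT k m (n + 1) hn i j = pairEmbedding (ZMod 2) (FlagRing k m) i (zGen k m j) := by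
  have hxT (i : Fin (n + 1)) :
      xT k m (n + 1) i j = singleAlgHom (A := fun _ => FlagRing k m) i (xGen k m j) := by
    rw [xT, singleAlgHom_apply]
    congr 1
    ext t
    simp [Pi.mulSingle_apply]
  simp [zT, hxT, zGen, pairEmbedding]

/-- An exponent truncated to `0` comes with a vanishing binomial coefficient. -/
lemma contractSnd_zGen_pow_mul_zGen_pow (n A B : ℕ) :
    contractSnd (topForm n) (zGen 2 n 0 ^ A * zGen 2 n 1 ^ B) =
      (A.choose n * B.choose (n + 1) : ZMod 2) •
          (xGen 2 n 0 ^ (A - n) * xGen 2 n 1 ^ (B - (n + 1))) +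
        (A.choose (n + 1) * B.choose n : ZMod 2) •
          (xGen 2 n 0 ^ (A - (n + 1)) * xGen 2 n 1 ^ (B - n)) := by
  rw [zGen, zGen, contractSnd_add_pow_mul_add_pow]
  simp only [topForm_monomial, mul_add, add_smul, Finset.sum_add_distrib, sum_choose_mul_ite_smul]

lemma contractSnd_zGen_pow_two_pow_sub_one {e : ℕ} (he : e ≠ 0) :
    contractSnd (topForm (2 ^ e))
        (zGen 2 (2 ^ e) 0 ^ (2 ^ (e + 1) - 1) * zGen 2 (2 ^ e) 1 ^ (2 ^ (e + 1) - 1)) =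
      xGen 2 (2 ^ e) 0 ^ (2 ^ e - 1) * xGen 2 (2 ^ e) 1 ^ (2 ^ e - 2) +
        xGen 2 (2 ^ e) 0 ^ (2 ^ e - 2) * xGen 2 (2 ^ e) 1 ^ (2 ^ e - 1) := by
  have := Nat.two_pow_succ e
  have hlt : 1 < 2 ^ e := Nat.one_lt_two_pow he
  have hodd {j : ℕ} (hj : j < 2 ^ (e + 1)) : ((2 ^ (e + 1) - 1).choose j : ZMod 2) = 1 := by
    simpa [ZMod.natCast_eq_one_iff_odd] using odd_choose_two_pow_mul_add 0 hj
  rw [contractSnd_zGen_pow_mul_zGen_pow, hodd (j := 2 ^ e) (by omega),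
    hodd (j := 2 ^ e + 1) (by omega), show 2 ^ (e + 1) - 1 - 2 ^ e = 2 ^ e - 1 by omega,
    show 2 ^ (e + 1) - 1 - (2 ^ e + 1) = 2 ^ e - 2 by omega]
  simp only [mul_one, one_smul]

lemma contractSnd_zGen_pow_succ_mul_zGen_pow_add_three {n : ℕ} (hn : 4 ∣ n) :
    contractSnd (topForm n) (zGen 2 n 0 ^ (n + 1) * zGen 2 n 1 ^ (n + 3)) =
      xGen 2 n 0 * xGen 2 n 1 ^ 2 + xGen 2 n 1 ^ 3 := by
  obtain ⟨m, rfl⟩ := hn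
  have hodd {j : ℕ} (hj : j < 4) : ((4 * m + 3).choose (4 * m + j) : ZMod 2) = 1 := by
    simpa [ZMod.natCast_eq_one_iff_odd] using odd_choose_two_pow_mul_add (k := 2) m hj
  have hodd₀ : ((4 * m + 3).choose (4 * m) : ZMod 2) = 1 := hodd (j := 0) (by norm_num)
  have hodd_succ : ((4 * m + 1).choose (4 * m) : ZMod 2) = 1 := by
    rw [Nat.choose_succ_self_right, ZMod.natCast_eq_one_iff_odd]
    exact ⟨2 * m, by ring⟩
  rw [contractSnd_zGen_pow_mul_zGen_pow, hodd (j := 1) (by norm_num), hodd₀, hodd_succ,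
    Nat.choose_self, Nat.add_sub_add_left, Nat.add_sub_cancel_left, Nat.add_sub_cancel_left,
    Nat.sub_self]
  simp

lemma contractSnd_zGen_pow_succ_mul_zGen_pow (n : ℕ) :
    contractSnd (topForm n) (zGen 2 n 0 ^ (n + 1) * zGen 2 n 1 ^ n) = 1 := by
  simp [contractSnd_zGen_pow_mul_zGen_pow]

/-- The factor `x` raises the contraction, of degree `2n`, to the top degree. -/
lemma topForm_xGen_zero_mul_contraction {n : ℕ} (hn : 2 ≤ n) :
    topForm n (xGen 2 n 0 *
      ((xGen 2 n 0 ^ (n - 1) * xGen 2 n 1 ^ (n - 2) +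
          xGen 2 n 0 ^ (n - 2) * xGen 2 n 1 ^ (n - 1)) *
        (xGen 2 n 0 * xGen 2 n 1 ^ 2 + xGen 2 n 1 ^ 3))) = 1 := by
  obtain ⟨q, rfl⟩ := Nat.exists_eq_add_of_le' hn
  set x := xGen 2 (q + 2) 0
  set y := xGen 2 (q + 2) 1
  have hexpand : x * ((x ^ (q + 1) * y ^ q + x ^ q * y ^ (q + 1)) * (x * y ^ 2 + y ^ 3)) =
      x ^ (q + 3) * y ^ (q + 2) + (x ^ (q + 2) * y ^ (q + 3) + x ^ (q + 2) * y ^ (q + 3)) +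
        x ^ (q + 1) * y ^ (q + 4) := by
    ring
  rw [show q + 2 - 1 = q + 1 from rfl, Nat.add_sub_cancel, hexpand, map_add, map_add, map_add,
    CharTwo.add_self_eq_zero]
  simp [x, y, topForm_monomial]

end ZeroDivisors

/-- for `s ≥ 3` and `e ≥ 2`, in `R(2, 2^e)^{⊗s}` one has
`(z_{2,1}^{2^{e+1}-1} z_{2,2}^{2^{e+1}-1}) · (z_{3,1}^{2^e+1} z_{3,2}^{2^e+3}) ·
∏_{i=4}^{s} (z_{i,1}^{2^e+1} z_{i,2}^{2^e}) ≠ 0`. -/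
theorem statement19 (s e : ℕ) (hs : 3 ≤ s) (he : 2 ≤ e) :
    (zT 2 (2 ^ e) s (by omega) ⟨1, by omega⟩ 0 ^ (2 ^ (e + 1) - 1) *
        zT 2 (2 ^ e) s (by omega) ⟨1, by omega⟩ 1 ^ (2 ^ (e + 1) - 1)) *
      (zT 2 (2 ^ e) s (by omega) ⟨2, by omega⟩ 0 ^ (2 ^ e + 1) *
        zT 2 (2 ^ e) s (by omega) ⟨2, by omega⟩ 1 ^ (2 ^ e + 3)) *
      ∏ i ∈ Finset.univ.filter (fun i : Fin s => 3 ≤ i.val),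
        (zT 2 (2 ^ e) s (by omega) i 0 ^ (2 ^ e + 1) *
          zT 2 (2 ^ e) s (by omega) i 1 ^ (2 ^ e)) ≠ 0 := by
  obtain ⟨t, rfl⟩ := Nat.exists_eq_add_of_le' hs
  intro hzero
  have hcontract := congrArg (contractTail (topForm (2 ^ e))) hzero
  simp only [zT_eq_pairEmbedding, ← map_pow, ← map_mul] at hcontract
  rw [contractTail_mul_mul_prod, contractSnd_zGen_pow_two_pow_sub_one (by omega),
    contractSnd_zGen_pow_succ_mul_zGen_pow_add_three (pow_dvd_pow 2 he),
    contractSnd_zGen_pow_succ_mul_zGen_pow, one_pow, mul_one, map_zero] at hcontract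
  have htop := topForm_xGen_zero_mul_contraction (Nat.one_lt_two_pow (by omega : e ≠ 0))
  rw [hcontract, mul_zero, map_zero] at htop
  exact zero_ne_one htop
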